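/- Let H be a complex Hilbert space, M a von Neumann algebra acting on H, ξ₀ a cyclic and separating vector for M, and N another von Neumann algebra acting on H with the closure of {b ξ₀ : b ∈ N, b ≥ 0} contained in P♯. Let α : N → B(H) be a linear map such that α(x) ∈ M and α(x) ξ₀ = x ξ₀ for every x ∈ N. Then there exists an orthogonal projection g ∈ M that lies in the von Neumann algebra generated by α(N), commutes with every element of α(N), and satisfies: α(xy) g = α(x) α(y) g and α(xy) (1 − g) = α(y) α(x) (1 − g) for all x, y ∈ N. -/

import Mathlib

open scoped InnerProductSpace
open Filter

variable {H : Type*} [NormedAddCommGroup H] [InnerProductSpace ℂ H] [CompleteSpace H]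

/-- The positive cone `P♯`: the closure in `H` of `{a ξ₀ : a ∈ M, a positive}`. -/
def sharpCone (M : VonNeumannAlgebra H) (ξ₀ : H) : Set H :=
  closure {ζ : H | ∃ a : H →L[ℂ] H, a ∈ M ∧ a.IsPositive ∧ a ξ₀ = ζ}

/-- `ξ₀` is a cyclic vector for `M`: the linear span of `{x ξ₀ : x ∈ M}` is dense in `H`. -/
def IsCyclicVector (M : VonNeumannAlgebra H) (ξ₀ : H) : Prop :=
  Dense ((Submodule.span ℂ ((fun x : H →L[ℂ] H => x ξ₀) '' (M : Set (H →L[ℂ] H)))) : Set H)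

/-- `ξ₀` is a separating vector for `M`: `x ∈ M` and `x ξ₀ = 0` imply `x = 0`. -/
def IsSeparatingVector (M : VonNeumannAlgebra H) (ξ₀ : H) : Prop :=
  ∀ x : H →L[ℂ] H, x ∈ M → x ξ₀ = 0 → x = 0

section JordanDefects

variable {A B : Type*} [Ring A] [Algebra ℂ A] [Ring B] [Algebra ℂ B]

/-- The failure of a linear map to be multiplicative at `(a, b)`. -/
def homDefect (φ : A →ₗ[ℂ] B) (a b : A) : B := φ (a * b) - φ a * φ b

/-- The failure of a linear map to be antimultiplicative at `(a, b)`. -/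
def antiDefect (φ : A →ₗ[ℂ] B) (a b : A) : B := φ (a * b) - φ b * φ a

/-- A linear map preserving the Jordan product `x * y + y * x`. -/
def IsJordanMap (φ : A →ₗ[ℂ] B) : Prop :=
  ∀ x y, φ (x * y + y * x) = φ x * φ y + φ y * φ x

theorem eq_of_add_self_eq_add_self {u v : B} (h : u + u = v + v) : u = v := by
  rw [← two_smul ℂ u, ← two_smul ℂ v] at h
  exact (IsUnit.mk0 (2 : ℂ) two_ne_zero).smul_left_cancel.mp h

namespace IsJordanMap

variable {φ : A →ₗ[ℂ] B}

theorem map_mul_swap (h : IsJordanMap φ) (x y : A) :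
    φ (y * x) = φ x * φ y + φ y * φ x - φ (x * y) := by
  rw [← h x y, map_add]; abel

theorem map_mul_self (h : IsJordanMap φ) (x : A) : φ (x * x) = φ x * φ x := by
  apply eq_of_add_self_eq_add_self
  rw [← map_add, h]

theorem map_mul_mul_self (h : IsJordanMap φ) (x y : A) :
    φ (x * y * x) = φ x * φ y * φ x := by
  apply eq_of_add_self_eq_add_self
  have h₁ := h x (x * y + y * x)
  have h₂ := h (x * x) y
  rw [h x y] at h₁
  rw [h.map_mul_self] at h₂
  have e : x * y * x + x * y * x =
      (x * (x * y + y * x) + (x * y + y * x) * x) - (x * x * y + y * (x * x)) := by noncomm_ring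
  rw [← map_add, e, map_sub, h₁, h₂]
  noncomm_ring

theorem map_triple (h : IsJordanMap φ) (x y z : A) :
    φ (x * y * z) + φ (z * y * x) = φ x * φ y * φ z + φ z * φ y * φ x := by
  have h₁ := h.map_mul_mul_self (x + z) y
  have e : (x + z) * y * (x + z) = x * y * x + z * y * z + (x * y * z + z * y * x) := by
    noncomm_ring
  rw [e, map_add, map_add, map_add, h.map_mul_mul_self, h.map_mul_mul_self, map_add] at h₁
  have e' : (φ x + φ z) * φ y * (φ x + φ z) = φ x * φ y * φ x + φ z * φ y * φ z +
    (φ x * φ y * φ z + φ z * φ y * φ x) := by noncomm_ring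
  rw [e'] at h₁
  exact add_left_cancel h₁

theorem commutator_commutator (h : IsJordanMap φ) (a b z : A) :
    (φ a * φ b - φ b * φ a) * φ z - φ z * (φ a * φ b - φ b * φ a) =
      φ ((a * b - b * a) * z - z * (a * b - b * a)) := by
  have h₁ := h.map_triple a b z
  have h₂ := h.map_triple b a z
  have e : (a * b - b * a) * z - z * (a * b - b * a) =
      (a * b * z + z * b * a) - (b * a * z + z * a * b) := by noncomm_ring
  rw [e, map_sub, map_add, map_add, h₁, h₂]
  noncomm_ring

theorem homDefect_swap (h : IsJordanMap φ) (a b : A) : homDefect φ b a = -homDefect φ a b := by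
  rw [homDefect, homDefect, h.map_mul_swap a b]; abel

theorem antiDefect_swap (h : IsJordanMap φ) (a b : A) :
    antiDefect φ b a = -antiDefect φ a b := by
  rw [antiDefect, antiDefect, h.map_mul_swap a b]; abel

theorem antiDefect_add_homDefect (h : IsJordanMap φ) (a b : A) :
    antiDefect φ a b + homDefect φ a b = φ (a * b - b * a) := by
  rw [antiDefect, homDefect, map_sub, h.map_mul_swap a b]; abel

theorem antiDefect_sub_homDefect (φ : A →ₗ[ℂ] B) (a b : A) :
    antiDefect φ a b - homDefect φ a b = φ a * φ b - φ b * φ a := by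
  rw [antiDefect, homDefect]; abel

theorem homDefect_mul_antiDefect_self (h : IsJordanMap φ) (a b : A) :
    homDefect φ a b * antiDefect φ a b = 0 := by
  have h₁ := h.map_triple a b (a * b)
  have h₂ := h.map_mul_mul_self a (b * b)
  have e₂ : a * b * b * a = a * (b * b) * a := by noncomm_ring
  rw [h.map_mul_self, e₂, h₂, h.map_mul_self] at h₁
  have e : homDefect φ a b * antiDefect φ a b =
      (φ (a * b) * φ (a * b) + φ a * (φ b * φ b) * φ a) -
        (φ a * φ b * φ (a * b) + φ (a * b) * φ b * φ a) := by
    rw [antiDefect, homDefect]; noncomm_ring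
  rw [e, h₁, sub_self]

theorem antiDefect_mul_homDefect_self (h : IsJordanMap φ) (a b : A) :
    antiDefect φ a b * homDefect φ a b = 0 := by
  have h₁ := h.map_triple b a (a * b)
  have h₂ := h.map_mul_mul_self b (a * a)
  have e₁ : a * b * a * b = (a * b) * (a * b) := by noncomm_ring
  have e₂ : b * a * (a * b) = b * (a * a) * b := by noncomm_ring
  rw [e₁, h.map_mul_self, e₂, h₂, h.map_mul_self] at h₁
  have e : antiDefect φ a b * homDefect φ a b =
      (φ b * (φ a * φ a) * φ b + φ (a * b) * φ (a * b)) -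
        (φ b * φ a * φ (a * b) + φ (a * b) * φ a * φ b) := by
    rw [antiDefect, homDefect]; noncomm_ring
  rw [e, h₁, sub_self]

theorem homDefect_mul_map_mul_antiDefect (h : IsJordanMap φ) (a b z : A) :
    homDefect φ a b * φ z * antiDefect φ a b = -(antiDefect φ a b * φ z * homDefect φ a b) := by
  rw [eq_neg_iff_add_eq_zero]
  apply eq_of_add_self_eq_add_self
  have hD := h.map_mul_mul_self (a * b - b * a) z
  have hS := h.map_mul_mul_self (a * b + b * a) z
  have hab := h.map_mul_mul_self a (b * z * b)
  have hba := h.map_mul_mul_self b (a * z * a)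
  rw [h.map_mul_mul_self b z] at hab
  rw [h.map_mul_mul_self a z] at hba
  rw [← h.antiDefect_add_homDefect] at hD
  rw [h] at hS
  have e : (a * b - b * a) * z * (a * b - b * a) = (a * b + b * a) * z * (a * b + b * a) -
      (a * (b * z * b) * a + a * (b * z * b) * a) -
      (b * (a * z * a) * b + b * (a * z * a) * b) := by noncomm_ring
  rw [e, map_sub, map_sub, map_add, map_add, hS, hab, hba] at hD
  have hE := antiDefect_sub_homDefect φ a b
  have e' : homDefect φ a b * φ z * antiDefect φ a b + antiDefect φ a b * φ z * homDefect φ a b +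
      (homDefect φ a b * φ z * antiDefect φ a b + antiDefect φ a b * φ z * homDefect φ a b) =
      (antiDefect φ a b + homDefect φ a b) * φ z * (antiDefect φ a b + homDefect φ a b) -
      (antiDefect φ a b - homDefect φ a b) * φ z * (antiDefect φ a b - homDefect φ a b) := by
    noncomm_ring
  rw [e', ← hD, hE]
  noncomm_ring

theorem antiDefect_commutator (h : IsJordanMap φ) (a b z : A) :
    antiDefect φ (a * b - b * a) z = antiDefect φ a b * φ z - φ z * antiDefect φ a b := by
  apply eq_of_add_self_eq_add_self
  have h₁ := h (a * b - b * a) z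
  have h₂ := h.commutator_commutator a b z
  rw [← antiDefect_sub_homDefect φ, map_sub] at h₂
  rw [map_add, ← h.antiDefect_add_homDefect] at h₁
  rw [antiDefect, ← h.antiDefect_add_homDefect]
  set p := antiDefect φ a b
  set q := homDefect φ a b
  have e : ∀ u v : B, u - φ z * (p + q) + (u - φ z * (p + q)) =
    (u + v) + (u - v) - φ z * (p + q) - φ z * (p + q) := by intros; abel
  rw [e _ (φ (z * (a * b - b * a))), h₁, ← h₂]
  noncomm_ring

theorem homDefect_commutator (h : IsJordanMap φ) (a b z : A) :
    homDefect φ (a * b - b * a) z = φ z * homDefect φ a b - homDefect φ a b * φ z := by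
  have h₁ := antiDefect_sub_homDefect φ (a * b - b * a) z
  rw [h.antiDefect_commutator, ← h.antiDefect_add_homDefect, sub_eq_iff_eq_add] at h₁
  rw [← sub_eq_iff_eq_add'] at h₁
  rw [← h₁]
  noncomm_ring

theorem defect_commutator_eq (h : IsJordanMap φ) (a b x y : A) :
    homDefect φ x y * antiDefect φ a b - antiDefect φ a b * homDefect φ x y =
      antiDefect φ x y * homDefect φ a b - homDefect φ a b * antiDefect φ x y := by
  apply eq_of_add_self_eq_add_self
  have h₁ := h.commutator_commutator a b (x * y - y * x)
  have h₂ := h.commutator_commutator x y (a * b - b * a)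
  rw [← antiDefect_sub_homDefect φ, ← h.antiDefect_add_homDefect] at h₁ h₂
  have e : φ ((x * y - y * x) * (a * b - b * a) - (a * b - b * a) * (x * y - y * x)) =
    -φ ((a * b - b * a) * (x * y - y * x) - (x * y - y * x) * (a * b - b * a)) := by
    rw [← map_neg]; congr 1; abel
  rw [e, ← h₁] at h₂
  set p := antiDefect φ a b
  set q := homDefect φ a b
  set r := antiDefect φ x y
  set s := homDefect φ x y
  rw [← sub_eq_zero] at h₂ ⊢
  rw [← neg_eq_zero, ← h₂]
  noncomm_ring

end IsJordanMap

section Bilinear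

variable (φ : A →ₗ[ℂ] B)

theorem homDefect_add_left (a a' b : A) :
    homDefect φ (a + a') b = homDefect φ a b + homDefect φ a' b := by
  simp only [homDefect, add_mul, map_add]; abel

theorem homDefect_add_right (a b b' : A) :
    homDefect φ a (b + b') = homDefect φ a b + homDefect φ a b' := by
  simp only [homDefect, mul_add, map_add]; abel

theorem antiDefect_add_left (a a' b : A) :
    antiDefect φ (a + a') b = antiDefect φ a b + antiDefect φ a' b := by
  simp only [antiDefect, add_mul, mul_add, map_add]; abel

theorem antiDefect_add_right (a b b' : A) :
    antiDefect φ a (b + b') = antiDefect φ a b + antiDefect φ a b' := by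
  simp only [antiDefect, add_mul, mul_add, map_add]; abel

theorem homDefect_smul_left (t : ℂ) (a b : A) :
    homDefect φ (t • a) b = t • homDefect φ a b := by
  simp [homDefect, smul_sub]

theorem homDefect_smul_right (t : ℂ) (a b : A) :
    homDefect φ a (t • b) = t • homDefect φ a b := by
  simp [homDefect, smul_sub]

theorem antiDefect_smul_left (t : ℂ) (a b : A) :
    antiDefect φ (t • a) b = t • antiDefect φ a b := by
  simp [antiDefect, smul_sub]

theorem antiDefect_smul_right (t : ℂ) (a b : A) :
    antiDefect φ a (t • b) = t • antiDefect φ a b := by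
  simp [antiDefect, smul_sub]

end Bilinear

end JordanDefects

/-- A property stable under addition and scalar multiplication holds everywhere as soon as it
holds for selfadjoint elements. -/
theorem forall_of_forall_isSelfAdjoint {A : Type*} [AddCommGroup A] [Module ℂ A]
    [StarAddMonoid A] [StarModule ℂ A] {P : A → Prop} (hsa : ∀ a, IsSelfAdjoint a → P a)
    (hadd : ∀ a b, P a → P b → P (a + b)) (hsmul : ∀ (t : ℂ) a, P a → P (t • a)) (a : A) :
    P a := by
  rw [← realPart_add_I_smul_imaginaryPart a]
  exact hadd _ _ (hsa _ (realPart a).2) (hsmul _ _ (hsa _ (imaginaryPart a).2))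

section JordanStar

variable {A B : Type*} [Ring A] [StarRing A] [Algebra ℂ A] [CStarAlgebra B]
  {φ : A →ₗ[ℂ] B}

namespace IsJordanMap

theorem star_antiDefect (h : IsJordanMap φ) (hs : ∀ x, φ (star x) = star (φ x)) {a b : A}
    (ha : IsSelfAdjoint a) (hb : IsSelfAdjoint b) :
    star (antiDefect φ a b) = -antiDefect φ a b := by
  rw [antiDefect, star_sub, ← hs, star_mul, star_mul, ← hs, ← hs, ha.star_eq, hb.star_eq,
    h.map_mul_swap a b]
  abel

theorem star_homDefect (h : IsJordanMap φ) (hs : ∀ x, φ (star x) = star (φ x)) {a b : A}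
    (ha : IsSelfAdjoint a) (hb : IsSelfAdjoint b) :
    star (homDefect φ a b) = -homDefect φ a b := by
  rw [homDefect, star_sub, ← hs, star_mul, star_mul, ← hs, ← hs, ha.star_eq, hb.star_eq,
    h.map_mul_swap a b]
  abel

variable [StarModule ℂ A]

theorem homDefect_mul_map_mul_antiDefect_self (h : IsJordanMap φ)
    (hs : ∀ x, φ (star x) = star (φ x)) {a b : A} (ha : IsSelfAdjoint a) (hb : IsSelfAdjoint b)
    (z : A) : homDefect φ a b * φ z * antiDefect φ a b = 0 := by
  revert z
  refine forall_of_forall_isSelfAdjoint (fun z hz => ?_) (fun z w hz hw => ?_) fun t z hz => ?_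
  · have h₁ := h.homDefect_mul_map_mul_antiDefect a b z
    have h₂ := h.antiDefect_mul_homDefect_self a b
    rw [← CStarRing.star_mul_self_eq_zero_iff]
    have e : star (homDefect φ a b * φ z * antiDefect φ a b) =
        -(homDefect φ a b * φ z * antiDefect φ a b) := by
      rw [h₁, star_neg, star_mul, star_mul, h.star_antiDefect hs ha hb, h.star_homDefect hs ha hb,
        ← hs, hz.star_eq]
      simp only [mul_neg, neg_mul, neg_neg, ← mul_assoc, h₁]
    rw [e]
    calc -(homDefect φ a b * φ z * antiDefect φ a b) * (homDefect φ a b * φ z * antiDefect φ a b)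
        = -(homDefect φ a b * φ z * (antiDefect φ a b * homDefect φ a b) *
            (φ z * antiDefect φ a b)) := by noncomm_ring
      _ = 0 := by rw [h₂]; simp
  · rw [map_add, mul_add, add_mul, hz, hw, add_zero]
  · rw [map_smul, mul_smul_comm, smul_mul_assoc, hz, smul_zero]

theorem homDefect_mul_antiDefect_of_shared (h : IsJordanMap φ)
    (hs : ∀ x, φ (star x) = star (φ x)) {a b y : A} (ha : IsSelfAdjoint a)
    (hb : IsSelfAdjoint b) (hy : IsSelfAdjoint y) :
    homDefect φ a y * antiDefect φ a b = 0 := by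
  have hqp : homDefect φ a y * antiDefect φ a b = -(homDefect φ a b * antiDefect φ a y) := by
    have := h.homDefect_mul_antiDefect_self a (b + y)
    rw [homDefect_add_right, antiDefect_add_right, add_mul, mul_add, mul_add,
      h.homDefect_mul_antiDefect_self, h.homDefect_mul_antiDefect_self, zero_add, add_zero] at this
    exact eq_neg_of_add_eq_zero_right this
  have hpq : antiDefect φ a b * homDefect φ a y = -(antiDefect φ a y * homDefect φ a b) := by
    have := h.antiDefect_mul_homDefect_self a (b + y)
    rw [homDefect_add_right, antiDefect_add_right, add_mul, mul_add, mul_add,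
      h.antiDefect_mul_homDefect_self, h.antiDefect_mul_homDefect_self, zero_add,
      add_zero] at this
    exact eq_neg_of_add_eq_zero_left this
  have hD := h.homDefect_mul_map_mul_antiDefect_self hs ha hy (a * b - b * a)
  rw [← h.antiDefect_add_homDefect, mul_add, add_mul] at hD
  have hqp0 := h.homDefect_mul_antiDefect_self a b
  rw [← CStarRing.star_mul_self_eq_zero_iff, star_mul, h.star_antiDefect hs ha hb,
    h.star_homDefect hs ha hy, neg_mul_neg]
  set p := antiDefect φ a b
  set q := homDefect φ a b
  set r := antiDefect φ a y
  set s := homDefect φ a y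
  calc p * s * (s * p) = -(p * (s * q * r)) := by rw [hqp]; noncomm_ring
    _ = p * s * p * r := by rw [eq_neg_of_add_eq_zero_right hD]; noncomm_ring
    _ = -(r * (q * p) * r) := by rw [hpq]; noncomm_ring
    _ = 0 := by rw [hqp0]; simp

theorem homDefect_mul_antiDefect_comm (h : IsJordanMap φ)
    (hs : ∀ x, φ (star x) = star (φ x)) {a b x y : A} (ha : IsSelfAdjoint a)
    (hb : IsSelfAdjoint b) (hx : IsSelfAdjoint x) (hy : IsSelfAdjoint y) :
    homDefect φ x y * antiDefect φ a b = homDefect φ a b * antiDefect φ x y := by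
  have h₁ : homDefect φ x y * antiDefect φ a b = -(homDefect φ a y * antiDefect φ x b) := by
    have := h.homDefect_mul_antiDefect_of_shared hs (hx.add ha) hb hy
    rw [homDefect_add_left, antiDefect_add_left, add_mul, mul_add, mul_add,
      h.homDefect_mul_antiDefect_of_shared hs hx hb hy,
      h.homDefect_mul_antiDefect_of_shared hs ha hb hy, zero_add, add_zero] at this
    exact eq_neg_of_add_eq_zero_left this
  have h₂ : homDefect φ a y * antiDefect φ x b = -(homDefect φ a b * antiDefect φ x y) := by
    have := h.homDefect_mul_antiDefect_of_shared hs (hb.add hy) hx ha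
    rw [homDefect_add_left, antiDefect_add_left, add_mul, mul_add, mul_add,
      h.homDefect_mul_antiDefect_of_shared hs hb hx ha,
      h.homDefect_mul_antiDefect_of_shared hs hy hx ha, zero_add, add_zero,
      h.homDefect_swap a b, h.homDefect_swap a y, h.antiDefect_swap x b, h.antiDefect_swap x y,
      neg_mul_neg, neg_mul_neg] at this
    exact eq_neg_of_add_eq_zero_right this
  rw [h₁, h₂, neg_neg]

theorem homDefect_mul_antiDefect_of_isSelfAdjoint (h : IsJordanMap φ)
    (hs : ∀ x, φ (star x) = star (φ x)) {a b x y : A} (ha : IsSelfAdjoint a)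
    (hb : IsSelfAdjoint b) (hx : IsSelfAdjoint x) (hy : IsSelfAdjoint y) :
    homDefect φ x y * antiDefect φ a b = 0 := by
  have hsp := h.homDefect_mul_antiDefect_comm hs ha hb hx hy
  have hps : antiDefect φ a b * homDefect φ x y = antiDefect φ x y * homDefect φ a b := by
    have := congrArg star hsp
    rwa [star_mul, star_mul, h.star_antiDefect hs ha hb, h.star_antiDefect hs hx hy,
      h.star_homDefect hs ha hb, h.star_homDefect hs hx hy, neg_mul_neg, neg_mul_neg] at this
  have hcomm : homDefect φ x y * antiDefect φ a b = antiDefect φ a b * homDefect φ x y := by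
    have h₁ := h.defect_commutator_eq a b x y
    rw [← hsp, ← hps] at h₁
    apply eq_of_add_self_eq_add_self
    rwa [sub_eq_iff_eq_add, sub_add_eq_add_sub, eq_sub_iff_add_eq] at h₁
  rw [← CStarRing.star_mul_self_eq_zero_iff, star_mul, h.star_antiDefect hs ha hb,
    h.star_homDefect hs hx hy, neg_mul_neg, ← hcomm]
  nth_rewrite 2 [hsp]
  rw [mul_assoc, ← mul_assoc (antiDefect φ a b), h.antiDefect_mul_homDefect_self, zero_mul,
    mul_zero]

theorem antiDefect_mul_homDefect (h : IsJordanMap φ) (hs : ∀ x, φ (star x) = star (φ x))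
    (a b x y : A) : antiDefect φ a b * homDefect φ x y = 0 := by
  revert a b x y
  refine forall_of_forall_isSelfAdjoint (fun a ha => ?_)
    (fun a a' ha ha' b x y => by rw [antiDefect_add_left, add_mul, ha, ha', add_zero])
    fun t a ha b x y => by rw [antiDefect_smul_left, smul_mul_assoc, ha, smul_zero]
  refine forall_of_forall_isSelfAdjoint (fun b hb => ?_)
    (fun b b' hb hb' x y => by rw [antiDefect_add_right, add_mul, hb, hb', add_zero])
    fun t b hb x y => by rw [antiDefect_smul_right, smul_mul_assoc, hb, smul_zero]
  refine forall_of_forall_isSelfAdjoint (fun x hx => ?_)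
    (fun x x' hx hx' y => by rw [homDefect_add_left, mul_add, hx, hx', add_zero])
    fun t x hx y => by rw [homDefect_smul_left, mul_smul_comm, hx, smul_zero]
  refine forall_of_forall_isSelfAdjoint (fun y hy => ?_)
    (fun y y' hy hy' => by rw [homDefect_add_right, mul_add, hy, hy', add_zero])
    fun t y hy => by rw [homDefect_smul_right, mul_smul_comm, hy, smul_zero]
  have := congrArg star (h.homDefect_mul_antiDefect_of_isSelfAdjoint hs ha hb hx hy)
  rwa [star_mul, h.star_antiDefect hs ha hb, h.star_homDefect hs hx hy, neg_mul_neg,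
    star_zero] at this

end IsJordanMap

end JordanStar

/-- A closed subspace invariant under an operator and its adjoint has commuting projection. -/
theorem starProjection_commute_of_invariant (K : Submodule ℂ H) [K.HasOrthogonalProjection]
    {T : H →L[ℂ] H} (hT : ∀ x ∈ K, T x ∈ K) (hT' : ∀ x ∈ K, star T x ∈ K) :
    K.starProjection * T = T * K.starProjection := by
  have key : ∀ S : H →L[ℂ] H, (∀ x ∈ K, S x ∈ K) →
      K.starProjection * (S * K.starProjection) = S * K.starProjection := fun S hS => by
    ext x
    exact Submodule.starProjection_eq_self_iff.mpr (hS _ (K.starProjection_apply_mem x))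
  have hP : star K.starProjection = K.starProjection := isSelfAdjoint_starProjection K
  have h₁ := congrArg star (key _ hT')
  rw [star_mul, star_mul, star_star, hP, mul_assoc] at h₁
  rw [← h₁, key _ hT]

section JordanDecomposition

variable {A : Type*} [Ring A] [StarRing A] [Algebra ℂ A] [StarModule ℂ A]

/-- A Jordan `*`-homomorphism into the bounded operators is, up to a central projection of the
von Neumann algebra generated by its range, a homomorphism plus an antihomomorphism. -/
theorem IsJordanMap.exists_projection {φ : A →ₗ[ℂ] (H →L[ℂ] H)} (h : IsJordanMap φ)
    (hs : ∀ x, φ (star x) = star (φ x)) :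
    ∃ g : H →L[ℂ] H, IsSelfAdjoint g ∧ g * g = g ∧
      g ∈ Set.centralizer (Set.centralizer (Set.range φ)) ∧
      (∀ x, g * φ x = φ x * g) ∧
      ∀ x y, φ (x * y) * g = φ x * φ y * g ∧ φ (x * y) * (1 - g) = φ y * φ x * (1 - g) := by
  let V : Submodule ℂ H := Submodule.span ℂ {ζ | ∃ a b η, homDefect φ a b η = ζ}
  let K := V.topologicalClosure
  have hK : IsClosed (K : Set H) := V.isClosed_topologicalClosure
  have : CompleteSpace K := hK.completeSpace_coe
  have hVK : V ≤ K := V.le_topologicalClosure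
  have hmem : ∀ a b η, homDefect φ a b η ∈ V := fun a b η => Submodule.subset_span ⟨a, b, η, rfl⟩
  -- an operator sending the generators of `V` into a closed subspace sends all of `K` there
  have extend : ∀ (T : H →L[ℂ] H) (L : Submodule ℂ H), IsClosed (L : Set H) →
      (∀ a b η, T (homDefect φ a b η) ∈ L) → ∀ x ∈ K, T x ∈ L := by
    intro T L hL hT
    have : K ≤ L.comap (T : H →ₗ[ℂ] H) := by
      refine V.topologicalClosure_minimal (Submodule.span_le.mpr ?_) (hL.preimage T.continuous)
      rintro _ ⟨a, b, η, rfl⟩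
      exact hT a b η
    exact fun x hx => this hx
  have hφK : ∀ z, ∀ x ∈ K, φ z x ∈ K := fun z => extend _ _ hK fun a b η => hVK <| by
    have e : φ z (homDefect φ a b η) =
        homDefect φ (a * b - b * a) z η + homDefect φ a b (φ z η) := by
      rw [h.homDefect_commutator]
      simp
    rw [e]
    exact V.add_mem (hmem _ _ _) (hmem _ _ _)
  have hcent : ∀ T ∈ Set.centralizer (Set.range φ), ∀ x ∈ K, T x ∈ K := by
    intro T hT
    have hT' : ∀ x, φ x * T = T * φ x := fun x => hT _ ⟨x, rfl⟩
    refine extend _ _ hK fun a b η => hVK ?_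
    have e : T * homDefect φ a b = homDefect φ a b * T := by
      rw [homDefect, mul_sub, sub_mul, hT', ← mul_assoc, ← hT' a, mul_assoc, ← hT' b, mul_assoc]
    have e' : T (homDefect φ a b η) = homDefect φ a b (T η) := congrArg (fun S => S η) e
    rw [e']
    exact hmem _ _ _
  have hcomm : ∀ x, K.starProjection * φ x = φ x * K.starProjection := fun x =>
    starProjection_commute_of_invariant K (hφK x) (by rw [← hs]; exact hφK _)
  have hanti : ∀ a b, antiDefect φ a b * K.starProjection = 0 := fun a b => by
    ext η
    have := extend (antiDefect φ a b) ⊥ isClosed_singleton (fun x y ζ => by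
      rw [Submodule.mem_bot]
      exact congrArg (fun S => S ζ) (h.antiDefect_mul_homDefect hs a b x y)) _
      (K.starProjection_apply_mem η)
    exact (Submodule.mem_bot ℂ).mp this
  have hhom : ∀ a b, homDefect φ a b * (1 - K.starProjection) = 0 := fun a b => by
    have e₁ : K.starProjection * homDefect φ a b = homDefect φ a b := by
      ext η
      exact Submodule.starProjection_eq_self_iff.mpr (hVK (hmem a b η))
    have e₂ : K.starProjection * homDefect φ a b = homDefect φ a b * K.starProjection := by
      rw [homDefect, mul_sub, sub_mul, hcomm, ← mul_assoc, hcomm, mul_assoc, hcomm, mul_assoc]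
    rw [mul_sub, mul_one, ← e₂, e₁, sub_self]
  have hsa : IsSelfAdjoint K.starProjection := isSelfAdjoint_starProjection K
  have hidem : K.starProjection * K.starProjection = K.starProjection :=
    K.isIdempotentElem_starProjection
  refine ⟨1 - K.starProjection, (IsSelfAdjoint.one _).sub hsa, ?_, ?_, fun x => ?_,
    fun x y => ⟨?_, ?_⟩⟩
  · rw [mul_sub, mul_one, sub_mul, one_mul, hidem, sub_self, sub_zero]
  · intro T hT
    have hT' : star T ∈ Set.centralizer (Set.range φ) := by
      rintro _ ⟨x, rfl⟩
      have := congrArg star (hT (φ (star x)) ⟨_, rfl⟩)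
      rw [star_mul, star_mul, ← hs, star_star] at this
      exact this.symm
    rw [mul_sub, sub_mul, mul_one, one_mul,
      starProjection_commute_of_invariant K (hcent T hT) (hcent _ hT')]
  · rw [mul_sub, sub_mul, mul_one, one_mul, hcomm]
  · exact sub_eq_zero.mp ((sub_mul _ _ _).symm.trans (hhom x y))
  · rw [sub_sub_cancel]
    exact sub_eq_zero.mp ((sub_mul _ _ _).symm.trans (hanti x y))

end JordanDecomposition

section PositiveMap

variable {B : Type*} [CStarAlgebra B] [PartialOrder B] [StarOrderedRing B]
  {S : StarSubalgebra ℂ B} {φ : S →ₗ[ℂ] B}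

theorem isSelfAdjoint_map_of_nonneg (hpos : ∀ x : S, 0 ≤ (x : B) → 0 ≤ φ x) (hone : φ 1 = 1)
    {a : S} (ha : IsSelfAdjoint a) : IsSelfAdjoint (φ a) := by
  have ha' : IsSelfAdjoint (a : B) := congrArg Subtype.val ha
  have h₁ : 0 ≤ φ (((‖(a : B)‖ : ℝ) : ℂ) • 1 - a) := hpos _ <| by
    have := ha'.le_algebraMap_norm_self
    rw [Algebra.algebraMap_eq_smul_one] at this
    simpa using this
  rw [map_sub, map_smul, hone] at h₁
  have h₂ := (IsSelfAdjoint.of_nonneg h₁)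
  have h₃ : IsSelfAdjoint ((((‖(a : B)‖ : ℝ) : ℂ)) • (1 : B)) :=
    IsSelfAdjoint.smul (by simp [IsSelfAdjoint]) (IsSelfAdjoint.one B)
  simpa using h₃.sub h₂

theorem map_star_of_nonneg (hpos : ∀ x : S, 0 ≤ (x : B) → 0 ≤ φ x) (hone : φ 1 = 1) (a : S) :
    φ (star a) = star (φ a) := by
  revert a
  refine forall_of_forall_isSelfAdjoint (fun a ha => ?_) (fun a b ha hb => ?_) fun t a ha => ?_
  · rw [ha.star_eq, (isSelfAdjoint_map_of_nonneg hpos hone ha).star_eq]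
  · rw [star_add, map_add, map_add, star_add, ha, hb]
  · rw [star_smul, map_smul, map_smul, star_smul, ha]

theorem aeval_bernsteinPolynomial_nonneg {a : S} (h₀ : 0 ≤ (a : B)) (h₁ : (a : B) ≤ 1) (n k : ℕ) :
    0 ≤ ((Polynomial.aeval a (bernsteinPolynomial ℂ n k) : S) : B) := by
  have e : ((Polynomial.aeval a (bernsteinPolynomial ℂ n k) : S) : B) =
      (n.choose k) • ((a : B) ^ k * (1 - (a : B)) ^ (n - k)) := by
    simp [bernsteinPolynomial, mul_assoc]
  rw [e]
  refine nsmul_nonneg (Commute.mul_nonneg (CStarAlgebra.pow_nonneg h₀ _)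
    (CStarAlgebra.pow_nonneg (sub_nonneg.mpr h₁) _) ?_) _
  exact ((Commute.one_right _).sub_right (Commute.refl _)).pow_pow _ _

theorem bernstein_kadison (hpos : ∀ x : S, 0 ≤ (x : B) → 0 ≤ φ x) (hone : φ 1 = 1) {a : S}
    (h₀ : 0 ≤ (a : B)) (h₁ : (a : B) ≤ 1) (n : ℕ) :
    0 ≤ (n * (n - 1)) • φ (a * a) + n • φ a - (n * n) • (φ a * φ a) := by
  let b : ℕ → S := fun k => Polynomial.aeval a (bernsteinPolynomial ℂ n k)
  have s₀ : ∑ k ∈ Finset.range (n + 1), φ (b k) = 1 := by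
    rw [← map_sum, ← map_sum, bernsteinPolynomial.sum, map_one, hone]
  have s₁ : ∑ k ∈ Finset.range (n + 1), k • φ (b k) = n • φ a := by
    have := congrArg (fun f => φ (Polynomial.aeval a f)) (bernsteinPolynomial.sum_smul ℂ n)
    simpa only [map_sum, map_nsmul, Polynomial.aeval_X] using this
  have s₂ : ∑ k ∈ Finset.range (n + 1), (k * (k - 1)) • φ (b k) = (n * (n - 1)) • φ (a * a) := by
    have := congrArg (fun f => φ (Polynomial.aeval a f)) (bernsteinPolynomial.sum_mul_smul ℂ n)
    simpa only [map_sum, map_nsmul, map_mul, Polynomial.aeval_X, pow_two] using this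
  have hm : IsSelfAdjoint (φ a) :=
    isSelfAdjoint_map_of_nonneg hpos hone (Subtype.ext (IsSelfAdjoint.of_nonneg h₀))
  have hsum : 0 ≤ ∑ k ∈ Finset.range (n + 1),
      (n • φ a - k • 1) * φ (b k) * (n • φ a - k • 1) := by
    refine Finset.sum_nonneg fun k _ => IsSelfAdjoint.conjugate_nonneg
      (hpos _ (aeval_bernsteinPolynomial_nonneg h₀ h₁ n k)) ?_
    rw [IsSelfAdjoint, star_sub, star_nsmul, star_nsmul, star_one, hm.star_eq]
  convert hsum using 1
  have e : ∀ k, (n • φ a - k • 1) * φ (b k) * (n • φ a - k • 1) =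
      (n • φ a) * φ (b k) * (n • φ a) - (k • φ (b k)) * (n • φ a) - (n • φ a) * (k • φ (b k)) +
        ((k * (k - 1)) • φ (b k) + k • φ (b k)) := by
    intro k
    have hk : k * (k - 1) + k = k * k := by cases k <;> simp; ring
    rw [← add_smul, hk]
    simp only [sub_mul, mul_sub, smul_mul_assoc, mul_smul_comm, one_mul, mul_one, mul_smul,
      smul_sub]
    abel
  simp only [e, Finset.sum_add_distrib, Finset.sum_sub_distrib, ← Finset.sum_mul,
    ← Finset.mul_sum, s₀, s₁, s₂, mul_one]
  simp only [smul_mul_assoc, mul_smul_comm, mul_smul]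
  abel

/-- Kadison's inequality for positive contractions. -/
theorem map_mul_self_le_map_mul_self (hpos : ∀ x : S, 0 ≤ (x : B) → 0 ≤ φ x) (hone : φ 1 = 1)
    {a : S} (h₀ : 0 ≤ (a : B)) (h₁ : (a : B) ≤ 1) : φ a * φ a ≤ φ (a * a) := by
  rw [← sub_nonneg]
  have hlim : Tendsto (fun n : ℕ => φ (a * a) - φ a * φ a +
      ((n : ℝ) + 1)⁻¹ • (φ a - φ (a * a))) atTop (nhds (φ (a * a) - φ a * φ a)) := by
    have := (tendsto_one_div_add_atTop_nhds_zero_nat (𝕜 := ℝ)).smul_const (φ a - φ (a * a))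
    simpa using this.const_add (φ (a * a) - φ a * φ a)
  refine ge_of_tendsto' hlim fun n => ?_
  have h := smul_nonneg (by positivity : 0 ≤ ((((n : ℝ) + 1) * ((n : ℝ) + 1))⁻¹))
    (bernstein_kadison hpos hone h₀ h₁ (n + 1))
  convert h using 1
  have hn : (n : ℝ) + 1 ≠ 0 := by positivity
  simp only [← Nat.cast_smul_eq_nsmul ℝ]
  push_cast [Nat.add_sub_cancel]
  match_scalars <;> field_simp
  ring

/-- A unital linear map which preserves squares of positive contractions is a Jordan map. -/
theorem isJordanMap_of_contraction (hone : φ 1 = 1)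
    (hsq : ∀ a : S, 0 ≤ (a : B) → (a : B) ≤ 1 → φ (a * a) = φ a * φ a) : IsJordanMap φ := by
  have hsa : ∀ a : S, IsSelfAdjoint a → φ (a * a) = φ a * φ a := by
    intro a ha
    have ha' : IsSelfAdjoint (a : B) := congrArg Subtype.val ha
    set c : ℝ := ‖(a : B)‖ + 1 with hc
    have hc0 : 0 < c := by positivity
    have hle : (a : B) ≤ c • (1 : B) := by
      have := ha'.le_algebraMap_norm_self
      rw [Algebra.algebraMap_eq_smul_one] at this
      refine this.trans ?_
      rw [hc, add_smul, one_smul]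
      exact le_add_of_nonneg_right zero_le_one
    have hge : -(c • (1 : B)) ≤ (a : B) := by
      have := ha'.neg_algebraMap_norm_le_self
      rw [Algebra.algebraMap_eq_smul_one] at this
      refine le_trans ?_ this
      rw [hc, add_smul, one_smul, neg_le_neg_iff]
      exact le_add_of_nonneg_right zero_le_one
    let e : S := (((2 * c)⁻¹ : ℝ) : ℂ) • (a + ((c : ℝ) : ℂ) • 1)
    have he : (e : B) = (2 * c)⁻¹ • ((a : B) + c • 1) := by
      change (((2 * c)⁻¹ : ℝ) : ℂ) • ((a : B) + ((c : ℝ) : ℂ) • 1) = _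
      simp only [Complex.coe_smul]
    have hea : a = ((2 * c : ℝ) : ℂ) • e - ((c : ℝ) : ℂ) • 1 := by
      simp only [e]
      rw [smul_smul, ← Complex.ofReal_mul, mul_inv_cancel₀ (by positivity)]
      simp
    have hφ := hsq e (by
        rw [he]
        exact smul_nonneg (by positivity) (by simpa using neg_le_iff_add_nonneg.mp hge)) (by
        rw [he]
        calc (2 * c)⁻¹ • ((a : B) + c • 1) ≤ (2 * c)⁻¹ • (c • 1 + c • 1) := by gcongr
          _ = 1 := by
            rw [← add_smul, ← two_mul, smul_smul, inv_mul_cancel₀ (by positivity), one_smul])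
    rw [hea]
    simp only [sub_mul, mul_sub, smul_mul_assoc, mul_smul_comm, one_mul, mul_one, map_sub,
      map_smul, hφ, hone]
  have hsa₂ : ∀ a b : S, IsSelfAdjoint a → IsSelfAdjoint b →
      φ (a * b + b * a) = φ a * φ b + φ b * φ a := by
    intro a b ha hb
    have := hsa _ (ha.add hb)
    have e : (a + b) * (a + b) = a * a + b * b + (a * b + b * a) := by noncomm_ring
    rw [e, map_add, map_add, hsa a ha, hsa b hb, map_add φ a b] at this
    have e' : (φ a + φ b) * (φ a + φ b) = φ a * φ a + φ b * φ b + (φ a * φ b + φ b * φ a) := by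
      noncomm_ring
    rw [e'] at this
    exact add_left_cancel this
  refine forall_of_forall_isSelfAdjoint (fun a ha => ?_) (fun a a' ha ha' b => ?_)
    fun t a ha b => ?_
  · refine forall_of_forall_isSelfAdjoint (fun b hb => hsa₂ a b ha hb) (fun b b' hb hb' => ?_)
      fun t b hb => ?_
    · have e : a * (b + b') + (b + b') * a = (a * b + b * a) + (a * b' + b' * a) := by
        noncomm_ring
      rw [e, map_add, hb, hb', map_add]
      noncomm_ring
    · rw [mul_smul_comm, smul_mul_assoc, ← smul_add, map_smul, hb, map_smul, mul_smul_comm,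
        smul_mul_assoc, smul_add]
  · have e : (a + a') * b + b * (a + a') = (a * b + b * a) + (a' * b + b * a') := by
      noncomm_ring
    rw [e, map_add, ha, ha', map_add]
    noncomm_ring
  · rw [mul_smul_comm, smul_mul_assoc, ← smul_add, map_smul, ha, map_smul, mul_smul_comm,
      smul_mul_assoc, smul_add]

end PositiveMap

section Separating

variable {M : VonNeumannAlgebra H} {ξ₀ : H}

/-- A vector separating for `M` is cyclic for the commutant of `M`. -/
theorem IsSeparatingVector.dense_commutant (hsep : IsSeparatingVector M ξ₀) :
    Dense {ζ : H | ∃ x ∈ M.commutant, x ξ₀ = ζ} := by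
  let V : Submodule ℂ H := M.commutant.toStarSubalgebra.toSubalgebra.toSubmodule.map
    (ContinuousLinearMap.apply ℂ H ξ₀ : (H →L[ℂ] H) →ₗ[ℂ] H)
  have hV : (V : Set H) = {ζ : H | ∃ x ∈ M.commutant, x ξ₀ = ζ} := rfl
  let K := V.topologicalClosure
  have hK : IsClosed (K : Set H) := V.isClosed_topologicalClosure
  have : CompleteSpace K := hK.completeSpace_coe
  have hinv : ∀ T ∈ M.commutant, ∀ x ∈ K, T x ∈ K := by
    intro T hT
    have : K ≤ K.comap (T : H →ₗ[ℂ] H) := by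
      refine V.topologicalClosure_minimal ?_ (hK.preimage T.continuous)
      rintro _ ⟨x, hx, rfl⟩
      exact V.le_topologicalClosure ⟨T * x, mul_mem (S := VonNeumannAlgebra H) hT hx, rfl⟩
    exact fun x hx => this hx
  have hP : K.starProjection ∈ M := by
    rw [← M.commutant_commutant, VonNeumannAlgebra.mem_commutant_iff]
    exact fun T hT => (starProjection_commute_of_invariant K (hinv T hT)
      (hinv _ (star_mem (S := VonNeumannAlgebra H) hT))).symm
  have hξ : ξ₀ ∈ K := V.le_topologicalClosure ⟨1, one_mem M.commutant, rfl⟩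
  have h0 : 1 - K.starProjection = 0 := hsep _ (sub_mem (one_mem M) hP) <| by
    simp [Submodule.starProjection_eq_self_iff.mpr hξ]
  rw [← hV]
  intro x
  have hx : K.starProjection x = x := by rw [← sub_eq_zero.mp h0]; rfl
  exact Submodule.starProjection_eq_self_iff.mp hx

open scoped ComplexOrder in
/-- An element of `M` moving a separating vector into the sharp cone is positive. -/
theorem nonneg_of_apply_mem_sharpCone (hsep : IsSeparatingVector M ξ₀) {a : H →L[ℂ] H}
    (ha : a ∈ M) (hcone : a ξ₀ ∈ sharpCone M ξ₀) : 0 ≤ a := by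
  have comm : ∀ b ∈ M, ∀ x ∈ M.commutant, ⟪b (x ξ₀), x ξ₀⟫_ℂ = ⟪b ξ₀, star x (x ξ₀)⟫_ℂ := by
    intro b hb x hx
    have e : b (x ξ₀) = x (b ξ₀) :=
      congrArg (fun S => S ξ₀) (VonNeumannAlgebra.mem_commutant_iff.mp hx b hb)
    rw [e, ContinuousLinearMap.star_eq_adjoint, ContinuousLinearMap.adjoint_inner_right]
  have hnonneg : ∀ ζ : H, 0 ≤ ⟪a ζ, ζ⟫_ℂ := by
    have hclosed : IsClosed {ζ : H | 0 ≤ ⟪a ζ, ζ⟫_ℂ} :=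
      isClosed_le continuous_const (a.continuous.inner continuous_id)
    refine fun ζ => hsep.dense_commutant.induction (P := fun ζ => 0 ≤ ⟪a ζ, ζ⟫_ℂ) ?_ hclosed ζ
    rintro _ ⟨x, hx, rfl⟩
    rw [comm a ha x hx]
    have hclosed' : IsClosed {η : H | 0 ≤ ⟪η, star x (x ξ₀)⟫_ℂ} :=
      isClosed_le continuous_const (continuous_id.inner continuous_const)
    refine closure_minimal ?_ hclosed' hcone
    rintro _ ⟨b, hb, hpos, rfl⟩
    rw [Set.mem_ofPred_eq, ← comm b hb x hx]
    exact hpos.inner_nonneg_left _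
  rw [ContinuousLinearMap.nonneg_iff_isPositive, ContinuousLinearMap.isPositive_iff_complex]
  intro ζ
  have := Complex.nonneg_iff.mp (hnonneg ζ)
  exact ⟨Complex.ext (by simp) (by simpa using this.2), this.1⟩

/-- A positive element of `M` with vanishing expectation at a separating vector is zero. -/
theorem IsSeparatingVector.eq_zero_of_inner_eq_zero (hsep : IsSeparatingVector M ξ₀)
    {d : H →L[ℂ] H} (hd : d ∈ M) (hd₀ : 0 ≤ d) (h : ⟪d ξ₀, ξ₀⟫_ℂ = 0) : d = 0 := by
  obtain ⟨c, rfl⟩ := CStarAlgebra.nonneg_iff_eq_star_mul_self.mp hd₀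
  refine hsep _ hd ?_
  have hc : c ξ₀ = 0 := by
    rw [mul_apply_eq_comp, ContinuousLinearMap.star_eq_adjoint,
      ContinuousLinearMap.adjoint_inner_left] at h
    exact inner_self_eq_zero.mp h
  rw [mul_apply_eq_comp, hc, map_zero]

/-- A positive unital map into `M` fixing the action on a separating vector is a Jordan map. -/
theorem IsSeparatingVector.isJordanMap (hsep : IsSeparatingVector M ξ₀)
    {S : StarSubalgebra ℂ (H →L[ℂ] H)} {φ : S →ₗ[ℂ] (H →L[ℂ] H)}
    (hpos : ∀ x : S, 0 ≤ (x : H →L[ℂ] H) → 0 ≤ φ x) (hone : φ 1 = 1) (hmem : ∀ x, φ x ∈ M)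
    (hfix : ∀ x : S, φ x ξ₀ = (x : H →L[ℂ] H) ξ₀) : IsJordanMap φ := by
  refine isJordanMap_of_contraction hone fun a h₀ h₁ => sub_eq_zero.mp ?_
  refine hsep.eq_zero_of_inner_eq_zero (sub_mem (hmem _) (mul_mem (hmem _) (hmem _)))
    (sub_nonneg.mpr (map_mul_self_le_map_mul_self hpos hone h₀ h₁)) ?_
  have ha : star (a : H →L[ℂ] H) = a := (IsSelfAdjoint.of_nonneg h₀).star_eq
  have hφa : star (φ a) = φ a := (IsSelfAdjoint.of_nonneg (hpos a h₀)).star_eq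
  have key : ∀ T : H →L[ℂ] H, star T = T → ⟪(T * T) ξ₀, ξ₀⟫_ℂ = ⟪T ξ₀, T ξ₀⟫_ℂ := fun T hT => by
    rw [mul_apply_eq_comp, ← ContinuousLinearMap.adjoint_inner_right,
      ← ContinuousLinearMap.star_eq_adjoint, hT]
  rw [sub_apply, inner_sub_left, hfix, key _ hφa, hfix]
  exact sub_eq_zero.mpr (key _ ha)

end Separating

/-- There is a projection `g ∈ M`, lying in the von Neumann algebra generated by
`α(N)` (its double commutant) and commuting with `α(N)`, such that `α(· ·) g` is homomorphic
and `α(· ·) (1 - g)` is antihomomorphic. -/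
theorem stmt5 (M N : VonNeumannAlgebra H) (ξ₀ : H)
    (hcyc : IsCyclicVector M ξ₀) (hsep : IsSeparatingVector M ξ₀)
    (hsub : closure {ζ : H | ∃ b : H →L[ℂ] H, b ∈ N ∧ b.IsPositive ∧ b ξ₀ = ζ} ⊆
      sharpCone M ξ₀)
    (α : (H →L[ℂ] H) → (H →L[ℂ] H))
    (hadd : ∀ x ∈ N, ∀ y ∈ N, α (x + y) = α x + α y)
    (hsmul : ∀ (c : ℂ), ∀ x ∈ N, α (c • x) = c • α x)
    (hmem : ∀ x ∈ N, α x ∈ M)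
    (hfix : ∀ x ∈ N, (α x) ξ₀ = x ξ₀) :
    ∃ g : H →L[ℂ] H, g ∈ M ∧ IsSelfAdjoint g ∧ g * g = g ∧
      g ∈ Set.centralizer (Set.centralizer {y : H →L[ℂ] H | ∃ x ∈ N, α x = y}) ∧
      (∀ x ∈ N, g * α x = α x * g) ∧
      (∀ x ∈ N, ∀ y ∈ N,
        α (x * y) * g = α x * α y * g ∧
        α (x * y) * (1 - g) = α y * α x * (1 - g)) := by
  let φ : N.toStarSubalgebra →ₗ[ℂ] (H →L[ℂ] H) :=
    { toFun := fun x => α x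
      map_add' := fun x y => hadd x x.2 y y.2
      map_smul' := fun c x => hsmul c x x.2 }
  have hφM : ∀ x, φ x ∈ M := fun x => hmem x x.2
  have hφξ : ∀ x, φ x ξ₀ = (x : H →L[ℂ] H) ξ₀ := fun x => hfix x x.2
  have hpos : ∀ x : N.toStarSubalgebra, 0 ≤ (x : H →L[ℂ] H) → 0 ≤ φ x := fun x hx =>
    nonneg_of_apply_mem_sharpCone hsep (hφM x) <| hsub <| subset_closure
      ⟨x, x.2, (ContinuousLinearMap.nonneg_iff_isPositive _).mp hx, (hφξ x).symm⟩
  have hone : φ 1 = 1 := sub_eq_zero.mp <| hsep _ (sub_mem (hφM 1) (one_mem M)) <| by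
    rw [sub_apply, hφξ]
    exact sub_self _
  have hrange : Set.range φ = {y : H →L[ℂ] H | ∃ x ∈ N, α x = y} :=
    Set.ext fun y => ⟨fun ⟨x, hx⟩ => ⟨x, x.2, hx⟩, fun ⟨x, hxN, hx⟩ => ⟨⟨x, hxN⟩, hx⟩⟩
  obtain ⟨g, hsa, hidem, hcent, hcomm, hmul⟩ :=
    (hsep.isJordanMap hpos hone hφM hφξ).exists_projection (map_star_of_nonneg hpos hone)
  refine ⟨g, ?_, hsa, hidem, hrange ▸ hcent, fun x hx => hcomm ⟨x, hx⟩,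
    fun x hx y hy => hmul ⟨x, hx⟩ ⟨y, hy⟩⟩
  have hsubset : Set.range φ ⊆ (M : Set (H →L[ℂ] H)) := Set.range_subset_iff.mpr hφM
  have := Set.centralizer_subset (Set.centralizer_subset hsubset) hcent
  rwa [VonNeumannAlgebra.centralizer_centralizer] at this
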